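/- arXiv:2104.10651 — 2 statements merged into one kernel-verified Lean document; each statement's English description precedes it below -/
import Mathlib

section
/- Let m_b be a mass function on a finite nonempty set Θ with belief function b and plausibility pl, and let A ⊆ Θ be nonempty. Then the L_2 (Euclidean) distance from m_b to the conditioning simplex M_A has a unique minimizer, namely the mass function m*(·|A) given by m*(B|A) = m_b(B) + pl(A^c)/(2^{|A|} − 1) for every nonempty B ⊆ A, and m*(X|A) = 0 for X ⊄ A, where pl(A^c) = 1 − b(A) = Σ_{C⊄A} m_b(C). -/
open Finset

/-- A mass function on the finite frame `Θ`. -/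
def IsMassFun {Θ : Type*} [Fintype Θ] [DecidableEq Θ] (m : Finset Θ → ℝ) : Prop :=
  m ∅ = 0 ∧ (∀ B, 0 ≤ m B) ∧ ∑ B : Finset Θ, m B = 1

/-- The conditioning simplex `M_A`: mass functions supported on nonempty subsets of `A`. -/
def condSimplex {Θ : Type*} [Fintype Θ] [DecidableEq Θ] (A : Finset Θ) :
    Set (Finset Θ → ℝ) :=
  {m | IsMassFun m ∧ ∀ B : Finset Θ, ¬(B ≠ ∅ ∧ B ⊆ A) → m B = 0}

/-- Belief value `b(A) = ∑_{B ⊆ A} m(B)`. -/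
def bel {Θ : Type*} [Fintype Θ] [DecidableEq Θ] (m : Finset Θ → ℝ) (A : Finset Θ) : ℝ :=
  ∑ B ∈ A.powerset, m B

/-- Plausibility value `pl(A) = ∑_{B ∩ A ≠ ∅} m(B)`. -/
def plaus {Θ : Type*} [Fintype Θ] [DecidableEq Θ] (m : Finset Θ → ℝ) (A : Finset Θ) : ℝ :=
  ∑ B ∈ Finset.univ.filter (fun B : Finset Θ => (B ∩ A).Nonempty), m B

/-- The `L₂` distance between two mass vectors (indexed by nonempty subsets of `Θ`). -/
noncomputable def dL2 {Θ : Type*} [Fintype Θ] [DecidableEq Θ] (m m' : Finset Θ → ℝ) : ℝ :=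
  Real.sqrt (∑ B ∈ Finset.univ.filter (fun B : Finset Θ => B ≠ ∅), (m B - m' B) ^ 2)

/-- The candidate `L₂` conditional mass function: redistribute `pl(Aᶜ)` equally among the
`2^{|A|} - 1` nonempty subsets of `A`. -/
noncomputable def mL2 {Θ : Type*} [Fintype Θ] [DecidableEq Θ] (mb : Finset Θ → ℝ)
    (A : Finset Θ) : Finset Θ → ℝ :=
  fun B => if B ≠ ∅ ∧ B ⊆ A then mb B + plaus mb Aᶜ / ((2 : ℝ) ^ A.card - 1) else 0

/-! The vectors supported on the nonempty subsets of `A` whose total is that of `mb` form an affine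
space. Its normal vectors are those constant on these subsets, with arbitrary entries elsewhere, and
`mL2 mb A - mb` is one of them. By Pythagoras `mL2 mb A` is therefore the unique nearest point of
this affine space, and since `plaus mb Aᶜ ≥ 0` it already lies in the simplex. -/

section SumOfSquares

variable {ι R : Type*} [CommRing R] {s : Finset ι} {f g h : ι → R}

theorem sum_sub_sq_eq_add_of_orthogonal (horth : ∑ i ∈ s, (f i - g i) * (g i - h i) = 0) :
    ∑ i ∈ s, (f i - h i) ^ 2 = ∑ i ∈ s, (f i - g i) ^ 2 + ∑ i ∈ s, (g i - h i) ^ 2 :=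
  calc
    ∑ i ∈ s, (f i - h i) ^ 2
        = ∑ i ∈ s, ((f i - g i) ^ 2 + (g i - h i) ^ 2 + 2 * ((f i - g i) * (g i - h i))) :=
      sum_congr rfl fun i _ => by ring
    _ = ∑ i ∈ s, (f i - g i) ^ 2 + ∑ i ∈ s, (g i - h i) ^ 2 := by
      rw [sum_add_distrib, sum_add_distrib, ← mul_sum, horth, mul_zero, add_zero]

theorem sum_sub_mul_sub_eq_zero_of_eq_add_const (c : R)
    (hc : ∀ i ∈ s, g i = f i + c ∨ g i = h i) (hsum : ∑ i ∈ s, g i = ∑ i ∈ s, h i) :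
    ∑ i ∈ s, (f i - g i) * (g i - h i) = 0 :=
  calc
    ∑ i ∈ s, (f i - g i) * (g i - h i) = ∑ i ∈ s, -c * (g i - h i) :=
      sum_congr rfl fun i hi => by
        rcases hc i hi with hshift | heq
        · rw [hshift]; ring
        · rw [heq, sub_self, mul_zero, mul_zero]
    _ = 0 := by rw [← mul_sum, sum_sub_distrib, hsum, sub_self, mul_zero]

end SumOfSquares

section MassFunctions

variable {Θ : Type*} [Fintype Θ] [DecidableEq Θ] {m m' : Finset Θ → ℝ} {A B : Finset Θ}

theorem plaus_compl_eq_sum_not_subset (m : Finset Θ → ℝ) (A : Finset Θ) :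
    plaus m Aᶜ = ∑ C : Finset Θ with ¬ C ⊆ A, m C := by
  simp only [plaus, ← sdiff_eq_inter_compl, sdiff_nonempty]

theorem bel_add_plaus_compl (m : Finset Θ → ℝ) (A : Finset Θ) :
    bel m A + plaus m Aᶜ = ∑ C, m C := by
  rw [bel, ← filter_subset_univ, plaus_compl_eq_sum_not_subset, sum_filter_add_sum_filter_not]

theorem plaus_nonneg (hm : ∀ B, 0 ≤ m B) (A : Finset Θ) : 0 ≤ plaus m A :=
  sum_nonneg fun B _ => hm B

theorem IsMassFun.sum_ne_empty (hm : IsMassFun m) : ∑ B with B ≠ ∅, m B = 1 := by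
  rw [filter_ne', sum_erase _ hm.1, hm.2.2]

theorem dL2_nonneg (m m' : Finset Θ → ℝ) : 0 ≤ dL2 m m' :=
  Real.sqrt_nonneg _

theorem dL2_sq (m m' : Finset Θ → ℝ) : dL2 m m' ^ 2 = ∑ B with B ≠ ∅, (m B - m' B) ^ 2 :=
  Real.sq_sqrt (sum_nonneg fun _ _ => sq_nonneg _)

theorem eq_of_dL2_eq_zero (hempty : m ∅ = m' ∅) (hdist : dL2 m m' = 0) : m = m' := by
  have hsum : ∑ B with B ≠ ∅, (m B - m' B) ^ 2 = 0 := by rw [← dL2_sq, hdist, zero_pow two_ne_zero]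
  rw [sum_eq_zero_iff_of_nonneg fun _ _ => sq_nonneg _] at hsum
  funext B
  by_cases hB : B = ∅
  · rw [hB, hempty]
  · exact sub_eq_zero.mp (pow_eq_zero_iff two_ne_zero |>.mp (hsum B (by simpa using hB)))

theorem card_filter_ne_empty_and_subset (A : Finset Θ) :
    #{B : Finset Θ | B ≠ ∅ ∧ B ⊆ A} = 2 ^ #A - 1 := by
  have hfilter : ({B | B ≠ ∅ ∧ B ⊆ A} : Finset (Finset Θ)) = A.powerset.erase ∅ := by
    ext B
    simp
  rw [hfilter, card_erase_of_mem (empty_mem_powerset A), card_powerset]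

theorem two_pow_card_sub_one_pos {α : Type*} {s : Finset α} (hs : s.Nonempty) :
    (0 : ℝ) < 2 ^ #s - 1 :=
  sub_pos.mpr (one_lt_pow₀ one_lt_two hs.card_ne_zero)

theorem mL2_apply_of_ne_empty_and_subset (hB : B ≠ ∅ ∧ B ⊆ A) :
    mL2 m A B = m B + plaus m Aᶜ / (2 ^ #A - 1) :=
  if_pos hB

theorem mL2_apply_of_not_ne_empty_and_subset (hB : ¬(B ≠ ∅ ∧ B ⊆ A)) : mL2 m A B = 0 :=
  if_neg hB

theorem mL2_apply_empty : mL2 m A ∅ = 0 :=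
  mL2_apply_of_not_ne_empty_and_subset fun h => h.1 rfl

theorem sum_ne_empty_mL2 (m : Finset Θ → ℝ) (hA : A.Nonempty) :
    ∑ B with B ≠ ∅, mL2 m A B = ∑ B with B ≠ ∅, m B := by
  have hcard : (#{B : Finset Θ | B ≠ ∅ ∧ B ⊆ A} : ℝ) = 2 ^ #A - 1 := by
    rw [card_filter_ne_empty_and_subset, Nat.cast_sub Nat.one_le_two_pow]
    norm_num
  have hnot : ∀ B : Finset Θ, B ≠ ∅ ∧ ¬ B ⊆ A ↔ ¬ B ⊆ A := fun B =>
    and_iff_right_of_imp fun hBA hB => hBA (hB ▸ empty_subset A)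
  calc
    ∑ B with B ≠ ∅, mL2 m A B
        = ∑ B with B ≠ ∅ ∧ B ⊆ A, (m B + plaus m Aᶜ / (2 ^ #A - 1)) := by
      rw [← filter_filter, sum_filter (· ⊆ A)]
      exact sum_congr rfl fun B hB => by simp [mL2, (mem_filter.mp hB).2]
    _ = ∑ B with B ≠ ∅ ∧ B ⊆ A, m B + plaus m Aᶜ := by
      rw [sum_add_distrib, sum_const, nsmul_eq_mul, hcard,
        mul_div_cancel₀ _ (two_pow_card_sub_one_pos hA).ne']
    _ = ∑ B with B ≠ ∅ ∧ B ⊆ A, m B + ∑ B with B ≠ ∅ ∧ ¬ B ⊆ A, m B := by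
      simp only [plaus_compl_eq_sum_not_subset, hnot]
    _ = ∑ B with B ≠ ∅, m B := by
      rw [← filter_filter, ← filter_filter, sum_filter_add_sum_filter_not]

theorem IsMassFun.mL2_mem_condSimplex (hm : IsMassFun m) (hA : A.Nonempty) :
    mL2 m A ∈ condSimplex A := by
  refine ⟨⟨mL2_apply_empty, fun B => ?_, ?_⟩, fun B => mL2_apply_of_not_ne_empty_and_subset⟩
  · by_cases hB : B ≠ ∅ ∧ B ⊆ A
    · rw [mL2_apply_of_ne_empty_and_subset hB]
      exact add_nonneg (hm.2.1 B)
        (div_nonneg (plaus_nonneg hm.2.1 Aᶜ) (two_pow_card_sub_one_pos hA).le)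
    · rw [mL2_apply_of_not_ne_empty_and_subset hB]
  · rw [← sum_erase _ mL2_apply_empty, ← filter_ne', sum_ne_empty_mL2 m hA, hm.sum_ne_empty]

theorem dL2_sq_eq_add_dL2_mL2_sq (hA : A.Nonempty)
    (hsupp : ∀ B, ¬(B ≠ ∅ ∧ B ⊆ A) → m' B = 0)
    (hsum : ∑ B with B ≠ ∅, m' B = ∑ B with B ≠ ∅, m B) :
    dL2 m m' ^ 2 = dL2 m (mL2 m A) ^ 2 + dL2 (mL2 m A) m' ^ 2 := by
  simp only [dL2_sq]
  refine sum_sub_sq_eq_add_of_orthogonal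
    (sum_sub_mul_sub_eq_zero_of_eq_add_const (plaus m Aᶜ / (2 ^ #A - 1)) (fun B _ => ?_)
      ((sum_ne_empty_mL2 m hA).trans hsum.symm))
  by_cases hB : B ≠ ∅ ∧ B ⊆ A
  · exact .inl (mL2_apply_of_ne_empty_and_subset hB)
  · exact .inr ((mL2_apply_of_not_ne_empty_and_subset hB).trans (hsupp B hB).symm)

end MassFunctions

/-- the `L₂` distance from `mb` to the conditioning simplex `M_A` is minimized
uniquely by `mL2 mb A`, where `pl(Aᶜ) = 1 - b(A) = ∑_{C ⊄ A} mb C`. -/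
theorem stmt5 {Θ : Type*} [Fintype Θ] [DecidableEq Θ] [Nonempty Θ]
    (mb : Finset Θ → ℝ) (hmb : IsMassFun mb)
    (A : Finset Θ) (hA : A.Nonempty) :
    (plaus mb Aᶜ = 1 - bel mb A) ∧
    (plaus mb Aᶜ = ∑ C ∈ Finset.univ.filter (fun C : Finset Θ => ¬ C ⊆ A), mb C) ∧
    mL2 mb A ∈ condSimplex A ∧
    (∀ m' ∈ condSimplex A, dL2 mb (mL2 mb A) ≤ dL2 mb m') ∧
    (∀ m' ∈ condSimplex A, (∀ m'' ∈ condSimplex A, dL2 mb m' ≤ dL2 mb m'') → m' = mL2 mb A) := by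
  have hmem := hmb.mL2_mem_condSimplex hA
  have hpyth : ∀ m' ∈ condSimplex A,
      dL2 mb m' ^ 2 = dL2 mb (mL2 mb A) ^ 2 + dL2 (mL2 mb A) m' ^ 2 := fun m' hm' =>
    dL2_sq_eq_add_dL2_mL2_sq hA hm'.2 (hm'.1.sum_ne_empty.trans hmb.sum_ne_empty.symm)
  refine ⟨?_, plaus_compl_eq_sum_not_subset mb A, hmem, fun m' hm' => ?_, fun m' hm' hmin => ?_⟩
  · rw [← hmb.2.2, ← bel_add_plaus_compl mb A, add_sub_cancel_left]
  · refine pow_le_pow_iff_left₀ (dL2_nonneg _ _) (dL2_nonneg _ _) two_ne_zero |>.mp ?_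
    rw [hpyth m' hm']
    exact le_add_of_nonneg_right (sq_nonneg _)
  · have hsq : dL2 mb m' ^ 2 ≤ dL2 mb (mL2 mb A) ^ 2 :=
      pow_le_pow_left₀ (dL2_nonneg _ _) (hmin _ hmem) 2
    have hdist : dL2 (mL2 mb A) m' = 0 :=
      pow_eq_zero_iff two_ne_zero |>.mp (le_antisymm (by linarith [hpyth m' hm']) (sq_nonneg _))
    exact (eq_of_dL2_eq_zero (mL2_apply_empty.trans hm'.1.1.symm) hdist).symm
end

section
/- Let m_b be a mass function on a finite nonempty set Θ, and let A ⊆ Θ be nonempty with A ≠ Θ. For each nonempty B̄ ⊆ A define w_{B̄} by w_{B̄}(B) = m_b(B) + max_{C⊄A} m_b(C) for nonempty B ⊆ A with B ≠ B̄, w_{B̄}(B̄) = m_b(B̄) + Σ_{C⊄A} m_b(C) − (2^{|A|}−2)·max_{C⊄A} m_b(C), and w_{B̄}(X) = 0 for X ⊄ A. Then the barycenter (1/(2^{|A|}−1)) Σ_{∅≠B̄⊆A} w_{B̄} equals the function B ↦ m_b(B) + (1/(2^{|A|}−1)) Σ_{C⊄A} m_b(C) on nonempty B ⊆ A (and 0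 for B ⊄ A), i.e. the L_2 conditional mass function of m_b given A. -/
open Finset

/-- `max_{C ⊄ A} mb C`, well defined when `A ≠ Θ`. -/
noncomputable def maxOut {Θ : Type*} [Fintype Θ] [DecidableEq Θ]
    (mb : Finset Θ → ℝ) (A : Finset Θ) (h : A ≠ Finset.univ) : ℝ :=
  (Finset.univ.filter fun C : Finset Θ => ¬ C ⊆ A).sup'
    (by
      obtain ⟨θ, hθ⟩ : ∃ θ, θ ∉ A := by
        by_contra hc
        push_neg at hc
        exact h (Finset.eq_univ_iff_forall.mpr hc)
      exact ⟨{θ}, by simp [hθ]⟩)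
    mb

/-- `∑_{C ⊄ A} mb C`. -/
def sumOut {Θ : Type*} [Fintype Θ] [DecidableEq Θ] (mb : Finset Θ → ℝ) (A : Finset Θ) : ℝ :=
  ∑ C ∈ Finset.univ.filter (fun C : Finset Θ => ¬ C ⊆ A), mb C

/-- The vertex `w_{B̄}` of the `L∞` conditional simplex. -/
noncomputable def vertexLinf {Θ : Type*} [Fintype Θ] [DecidableEq Θ]
    (mb : Finset Θ → ℝ) (A : Finset Θ) (h : A ≠ Finset.univ) (Bbar : Finset Θ) :
    Finset Θ → ℝ :=
  fun X =>
    if X = Bbar then mb Bbar + sumOut mb A - ((2 : ℝ) ^ A.card - 2) * maxOut mb A h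
    else if X ≠ ∅ ∧ X ⊆ A then mb X + maxOut mb A h
    else 0

/-!
Fix a nonempty `X ⊆ A`, and put `N = 2 ^ |A| - 1` and `M = max_{C ⊄ A} m C`. Among the `N` vertices
`w_B̄`, all but `w_X` add `M` to `m X`, and these `N - 1` increments cancel against the correction
`-(N - 1) * M` in `w_X`. So the values at `X` add up to `N * m X + ∑_{C ⊄ A} m C`, whatever `M` is.
-/

section CappedSimplex

variable {ι R : Type*} [DecidableEq ι]

/-- Over an ordered field and for `t ≤ #s * c`, the vertex indexed by `j ∈ s` of the simplex of
functions `w` supported on `s` with `w ≤ f + c` on `s` and `∑ i ∈ s, w i = ∑ i ∈ s, f i + t`; the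
upper bound is attained at every `i ∈ s` other than `j`. The `L∞` conditional simplex is the case
where `s` consists of the nonempty subsets of `A`. -/
def cappedSimplexVertex [Ring R] (s : Finset ι) (f : ι → R) (c t : R) (j : ι) : ι → R :=
  fun i => if i = j then f j + t - (#s - 1) * c else if i ∈ s then f i + c else 0

theorem cappedSimplexVertex_of_mem [Ring R] {s : Finset ι} {i : ι} (hi : i ∈ s) (f : ι → R)
    (c t : R) (j : ι) :
    cappedSimplexVertex s f c t j i = f i + c + if i = j then t - #s * c else 0 := by
  unfold cappedSimplexVertex
  split_ifs with hij
  · subst hij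
    noncomm_ring
  · rw [add_zero]

theorem cappedSimplexVertex_of_notMem [Ring R] {s : Finset ι} {i j : ι} (hi : i ∉ s) (hj : j ∈ s)
    (f : ι → R) (c t : R) : cappedSimplexVertex s f c t j i = 0 := by
  have hij : i ≠ j := fun h => hi (h ▸ hj)
  rw [cappedSimplexVertex, if_neg hij, if_neg hi]

theorem sum_cappedSimplexVertex [Ring R] (s : Finset ι) (f : ι → R) (c t : R) (i : ι) :
    ∑ j ∈ s, cappedSimplexVertex s f c t j i = if i ∈ s then #s * f i + t else 0 := by
  split_ifs with hi
  · calc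
      ∑ j ∈ s, cappedSimplexVertex s f c t j i
          = ∑ j ∈ s, (f i + c + if i = j then t - #s * c else 0) :=
        sum_congr rfl fun j _ => cappedSimplexVertex_of_mem hi f c t j
      _ = #s * (f i + c) + (t - #s * c) := by
        rw [sum_add_distrib, sum_const, nsmul_eq_mul, sum_ite_eq, if_pos hi]
      _ = #s * f i + t := by noncomm_ring
  · exact sum_eq_zero fun j hj => cappedSimplexVertex_of_notMem hi hj f c t

theorem barycenter_cappedSimplexVertex [DivisionRing R] {s : Finset ι} (hs : (#s : R) ≠ 0)
    (f : ι → R) (c t : R) (i : ι) :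
    (#s : R)⁻¹ * ∑ j ∈ s, cappedSimplexVertex s f c t j i =
      if i ∈ s then f i + (#s : R)⁻¹ * t else 0 := by
  rw [sum_cappedSimplexVertex, mul_ite, mul_zero, mul_add, inv_mul_cancel_left₀ hs]

end CappedSimplex

theorem cast_card_powerset_filter_ne_empty {α : Type*} [DecidableEq α] (R : Type*) [Ring R]
    (A : Finset α) : (#{B ∈ A.powerset | B ≠ ∅} : R) = 2 ^ #A - 1 := by
  rw [filter_ne', cast_card_erase_of_mem (empty_mem_powerset A), card_powerset, Nat.cast_pow,
    Nat.cast_ofNat]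

section MassFunction

variable {Θ : Type*} [Fintype Θ] [DecidableEq Θ] (m : Finset Θ → ℝ) {A : Finset Θ}

theorem vertexLinf_eq_cappedSimplexVertex (hA : A ≠ univ) (B : Finset Θ) :
    vertexLinf m A hA B =
      cappedSimplexVertex {B ∈ A.powerset | B ≠ ∅} m (maxOut m A hA) (sumOut m A) B := by
  have hcard : (#{B ∈ A.powerset | B ≠ ∅} : ℝ) - 1 = 2 ^ #A - 2 := by
    rw [cast_card_powerset_filter_ne_empty]
    ring
  funext X
  simp only [vertexLinf, cappedSimplexVertex, hcard, mem_filter, mem_powerset, and_comm]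

theorem bel_add_sumOut (A : Finset Θ) : bel m A + sumOut m A = ∑ B, m B := by
  rw [bel, sumOut, ← filter_subset_univ, sum_filter_add_sum_filter_not]

theorem stmt9_general (hA : A.Nonempty) (hAuniv : A ≠ univ) :
    (∀ X : Finset Θ,
      (1 / ((2 : ℝ) ^ #A - 1)) * ∑ B ∈ A.powerset with B ≠ ∅, vertexLinf m A hAuniv B X =
        if X ≠ ∅ ∧ X ⊆ A then m X + sumOut m A / ((2 : ℝ) ^ #A - 1) else 0) ∧
    sumOut m A = ∑ B, m B - bel m A := by
  refine ⟨fun X => ?_, eq_sub_of_add_eq' (bel_add_sumOut m A)⟩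
  have hcard := cast_card_powerset_filter_ne_empty ℝ A
  have hcard_ne : (#{B ∈ A.powerset | B ≠ ∅} : ℝ) ≠ 0 := by
    rw [hcard]
    exact (sub_pos.2 (one_lt_pow₀ one_lt_two hA.card_ne_zero)).ne'
  have hbary := barycenter_cappedSimplexVertex hcard_ne m (maxOut m A hAuniv) (sumOut m A) X
  simpa only [vertexLinf_eq_cappedSimplexVertex, hcard, mem_filter, mem_powerset, and_comm,
    one_div, inv_mul_eq_div] using hbary

end MassFunction

/-- the barycenter `(1/(2^{|A|}-1)) ∑_{∅≠B̄⊆A} w_{B̄}` of the vertices of the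
`L∞` conditional simplex equals `B ↦ mb B + (∑_{C⊄A} mb C)/(2^{|A|}-1)` on nonempty `B ⊆ A`
(and 0 for `B ⊄ A`), i.e. the `L₂` conditional mass function (since `∑_{C⊄A} mb C = 1 − b(A)`). -/
theorem stmt9 {Θ : Type*} [Fintype Θ] [DecidableEq Θ] [Nonempty Θ]
    (mb : Finset Θ → ℝ)
    (hmb0 : mb ∅ = 0) (hmbnn : ∀ B, 0 ≤ mb B) (hmbsum : ∑ B : Finset Θ, mb B = 1)
    (A : Finset Θ) (hA : A.Nonempty) (hAuniv : A ≠ Finset.univ) :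
    (∀ X : Finset Θ,
      (1 / ((2 : ℝ) ^ A.card - 1)) *
          ∑ Bbar ∈ A.powerset.filter (fun B => B ≠ ∅), vertexLinf mb A hAuniv Bbar X =
        (if X ≠ ∅ ∧ X ⊆ A then mb X + sumOut mb A / ((2 : ℝ) ^ A.card - 1) else 0)) ∧
    sumOut mb A = 1 - bel mb A :=
  hmbsum ▸ stmt9_general mb hA hAuniv
end
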